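/- Let B be a unital C*-subalgebra of B(H), let μ be a regular Borel probability measure on the state space K of B, and suppose there is a unit vector x ∈ H such that ω_x|_B is the barycenter of μ. Then there exists a positive-operator-valued measure A on (K, Σ) with A(S) ∈ B' for every S ∈ Σ, such that ⟨A(S)^{1/2} x, B (A(S)^{1/2} x)⟩ = ∫_S ω(B) dμ(ω) for all S ∈ Σ and all B ∈ B. -/

import Mathlib

open scoped InnerProductSpace ComplexOrder
open MeasureTheory

noncomputable section

variable {H : Type*} [NormedAddCommGroup H] [InnerProductSpace ℂ H] [CompleteSpace H]

/-- A state on a (C*-)subalgebra `B ⊆ B(H)`: a positive linear functional `ω` with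
`ω(I) = 1`, regarded as an element of the weak-* dual of `B`. -/
def IsStateOn (B : StarSubalgebra ℂ (H →L[ℂ] H)) (ω : WeakDual ℂ B) : Prop :=
  (∀ b : B, 0 ≤ (b : H →L[ℂ] H) → 0 ≤ ω b) ∧ ω 1 = 1

/-- The state space `K` of `B`, equipped with the weak-* topology. -/
abbrev StateSpace (B : StarSubalgebra ℂ (H →L[ℂ] H)) : Type _ :=
  {ω : WeakDual ℂ B // IsStateOn B ω}

/-- The Borel σ-algebra `Σ` of the state space `K`. -/
instance (B : StarSubalgebra ℂ (H →L[ℂ] H)) : MeasurableSpace (StateSpace B) := borel _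

instance (B : StarSubalgebra ℂ (H →L[ℂ] H)) : BorelSpace (StateSpace B) := ⟨rfl⟩

/-- A positive-operator-valued measure on a measurable space `(X, Σ)`:
`0 ≤ A S ≤ I` for every `S ∈ Σ`, and `A` is countably additive in the weak operator
topology. -/
def IsPOVMeasure {X : Type*} [MeasurableSpace X] (A : Set X → (H →L[ℂ] H)) : Prop :=
  (∀ S : Set X, MeasurableSet S → 0 ≤ A S ∧ A S ≤ 1) ∧
  ∀ f : ℕ → Set X, (∀ n, MeasurableSet (f n)) → Pairwise (Function.onFun Disjoint f) →
    ∀ y z : H, HasSum (fun n => ⟪y, A (f n) z⟫_ℂ) ⟪y, A (⋃ n, f n) z⟫_ℂ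

/-!
Integrating the states over `S` gives a positive functional `ψ` on `B` dominated by `ω_x`. So the
form `(c, b) ↦ ψ (c⋆ b)` is bounded by the inner product of `H` on the orbit `B x`, and there is a
unique operator `0 ≤ A S ≤ 1` vanishing on `(B x)ᗮ` with `⟪c x, A S (b x)⟫ = ψ (c⋆ b)`. Since
`ψ ((a⋆ c)⋆ b) = ψ (c⋆ (a b))`, this operator commutes with `B`. Countable additivity of `A` can be
tested on the dense subspace `B x + (B x)ᗮ` because the partial sums of `A` are bounded, and there
it is countable additivity of the integral.
-/

section SesquilinearForm

lemma isSymm_of_isNonneg {V : Type*} [AddCommGroup V] [Module ℂ V] {φ : V →ₗ⋆[ℂ] V →ₗ[ℂ] ℂ}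
    (hφ : φ.IsNonneg) : φ.IsSymm where
  eq u v := by
    have him (w : V) : (φ w w).im = 0 := (Complex.nonneg_iff.1 (hφ.nonneg w)).2.symm
    have hadd : (φ u v).im + (φ v u).im = 0 := by
      simpa [him] using him (u + v)
    have hadd_I : (φ u v).re - (φ v u).re = 0 := by
      simpa [him, ← sub_eq_add_neg, neg_add_eq_sub] using him (u + Complex.I • v)
    exact Complex.ext (by simpa using by linarith) (by simpa using by linarith)

lemma exists_hilbertSpace_inner_eq.{u} {𝕜 : Type*} [RCLike 𝕜] {V : Type u} [AddCommGroup V]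
    [Module 𝕜 V] {φ : V →ₗ⋆[𝕜] V →ₗ[𝕜] 𝕜} (hφ : φ.IsPosSemidef) :
    ∃ (K : Type u) (_ : NormedAddCommGroup K) (_ : InnerProductSpace 𝕜 K) (_ : CompleteSpace K)
      (j : V →ₗ[𝕜] K), ∀ u v, ⟪j u, j v⟫_𝕜 = φ u v := by
  let core : PreInnerProductSpace.Core 𝕜 V :=
    { inner := fun u v => φ u v
      conj_inner_symm := fun u v => hφ.isSymm.eq v u
      re_inner_nonneg := fun v => (RCLike.nonneg_iff.1 (hφ.isNonneg.nonneg v)).1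
      add_left := fun u v w => by simp
      smul_left := fun u v r => by simp }
  let : SeminormedAddCommGroup V := InnerProductSpace.Core.toSeminormedAddCommGroup (c := core)
  let : InnerProductSpace 𝕜 V := InnerProductSpace.ofCore core
  exact ⟨UniformSpace.Completion V, inferInstance, inferInstance, inferInstance,
    UniformSpace.Completion.toComplL.toLinearMap, UniformSpace.Completion.inner_coe⟩

end SesquilinearForm

section DenseRange

open Filter Topology

variable {𝕜 ι V E : Type*} [RCLike 𝕜] [NormedAddCommGroup E]

lemma ext_inner_of_denseRange [InnerProductSpace 𝕜 E] {T : V → E} {A A' : E →L[𝕜] E}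
    (hT : DenseRange T) (h : ∀ u v, ⟪T u, A (T v)⟫_𝕜 = ⟪T u, A' (T v)⟫_𝕜) : A = A' :=
  ContinuousLinearMap.coeFn_injective <| hT.equalizer A.continuous A'.continuous <|
    funext fun v => hT.eq_of_inner_right 𝕜 fun u => h u v

lemma le_of_inner_le_of_denseRange [InnerProductSpace ℂ E] {T : V → E} {A A' : E →L[ℂ] E}
    (hT : DenseRange T) (h : ∀ v, ⟪T v, A (T v)⟫_ℂ ≤ ⟪T v, A' (T v)⟫_ℂ) : A ≤ A' := by
  have hnonneg (y : E) : 0 ≤ ⟪(A' - A) y, y⟫_ℂ := by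
    rw [← inner_conj_symm, starRingEnd_apply, star_nonneg_iff]
    refine hT.induction_on y (isClosed_le (by fun_prop) (by fun_prop)) fun v => ?_
    simpa only [sub_apply, inner_sub_right, sub_nonneg] using h v
  rw [ContinuousLinearMap.le_def, ContinuousLinearMap.isPositive_iff_complex]
  exact fun y =>
    ⟨(Complex.eq_re_of_ofReal_le (hnonneg y)).symm, (Complex.nonneg_iff.1 (hnonneg y)).1⟩

lemma tendsto_of_denseRange_of_lipschitzWith {X Y : Type*} [PseudoMetricSpace X]
    [PseudoMetricSpace Y] {l : Filter ι} {T : V → X} {f : ι → X → Y} {g : X → Y} {K : NNReal}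
    (hT : DenseRange T) (hf : ∀ i, LipschitzWith K (f i)) (hg : Continuous g)
    (h : ∀ v, Tendsto (fun i => f i (T v)) l (𝓝 (g (T v)))) (y : X) :
    Tendsto (fun i => f i y) l (𝓝 (g y)) :=
  have hf_equicontinuous := (LipschitzWith.uniformEquicontinuous f K hf).equicontinuous
  hT.induction_on y (hf_equicontinuous.isClosed_setOfPred_tendsto hg) h

lemma tendsto_inner_of_denseRange [InnerProductSpace 𝕜 E] {l : Filter ι} {T : V → E}
    {A : ι → E →L[𝕜] E} {A' : E →L[𝕜] E} {C : NNReal} (hT : DenseRange T)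
    (hA : ∀ i, ‖A i‖₊ ≤ C)
    (h : ∀ u v, Tendsto (fun i => ⟪T u, A i (T v)⟫_𝕜) l (𝓝 ⟪T u, A' (T v)⟫_𝕜)) (y z : E) :
    Tendsto (fun i => ⟪y, A i z⟫_𝕜) l (𝓝 ⟪y, A' z⟫_𝕜) := by
  have hA_le (i : ι) (w : E) : ‖A i w‖ ≤ C * ‖w‖ := (A i).le_of_opNorm_le (hA i) w
  have hlipschitz_right (u : E) (i : ι) : LipschitzWith (‖u‖₊ * C) fun w => ⟪u, A i w⟫_𝕜 :=
    LipschitzWith.of_dist_le_mul fun w w' => by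
      simp only [dist_eq_norm, ← inner_sub_right, ← map_sub, NNReal.coe_mul, coe_nnnorm, mul_assoc]
      exact (norm_inner_le_norm _ _).trans (by gcongr; exact hA_le i _)
  have hlipschitz_left (i : ι) : LipschitzWith (C * ‖z‖₊) fun w => ⟪w, A i z⟫_𝕜 :=
    LipschitzWith.of_dist_le_mul fun w w' => by
      simp only [dist_eq_norm, ← inner_sub_left, NNReal.coe_mul, coe_nnnorm]
      rw [mul_comm]
      exact (norm_inner_le_norm _ _).trans (by gcongr; exact hA_le i z)
  have hright (u : V) : Tendsto (fun i => ⟪T u, A i z⟫_𝕜) l (𝓝 ⟪T u, A' z⟫_𝕜) :=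
    tendsto_of_denseRange_of_lipschitzWith (g := fun w => ⟪T u, A' w⟫_𝕜) hT
      (hlipschitz_right (T u)) (by fun_prop) (h u) z
  exact tendsto_of_denseRange_of_lipschitzWith (g := fun w => ⟪w, A' z⟫_𝕜) hT hlipschitz_left
    (by fun_prop) hright y

lemma hasSum_inner_of_denseRange [InnerProductSpace ℂ E] [CompleteSpace E] {T : V → E}
    {A : ι → E →L[ℂ] E} {A' : E →L[ℂ] E} (hT : DenseRange T) (hA : ∀ i, 0 ≤ A i)
    (h : ∀ u v, HasSum (fun i => ⟪T u, A i (T v)⟫_ℂ) ⟪T u, A' (T v)⟫_ℂ) (y z : E) :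
    HasSum (fun i => ⟪y, A i z⟫_ℂ) ⟪y, A' z⟫_ℂ := by
  have inner_sum_apply (s : Finset ι) (y z : E) :
      ∑ i ∈ s, ⟪y, A i z⟫_ℂ = ⟪y, (∑ i ∈ s, A i) z⟫_ℂ := by
    rw [sum_apply, inner_sum]
  have sum_le (s : Finset ι) : ∑ i ∈ s, A i ≤ A' := by
    refine le_of_inner_le_of_denseRange hT fun v => ?_
    rw [← inner_sum_apply]
    exact sum_le_hasSum s
      (fun i _ => ((A i).nonneg_iff_isPositive.1 (hA i)).inner_nonneg_right _) (h v v)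
  have nnnorm_sum_le (s : Finset ι) : ‖∑ i ∈ s, A i‖₊ ≤ ‖A'‖₊ :=
    CStarAlgebra.norm_le_norm_of_nonneg_of_le (Finset.sum_nonneg fun i _ => hA i) (sum_le s)
  simp only [HasSum, inner_sum_apply] at h ⊢
  exact tendsto_inner_of_denseRange hT nnnorm_sum_le h y z

end DenseRange

section RadonNikodym

variable {V E : Type*} [AddCommGroup V] [Module ℂ V] [NormedAddCommGroup E]
  [InnerProductSpace ℂ E]

/-- The map `(v, w) ↦ T v + w` on `V × (range T)ᗮ`. It has dense range even if `T` does not, so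
that a bounded operator is determined by its matrix coefficients on this range. -/
def orthogonalExtension (T : V →ₗ[ℂ] E) : V × T.rangeᗮ →ₗ[ℂ] E :=
  T.coprod T.rangeᗮ.subtype

lemma orthogonalExtension_apply (T : V →ₗ[ℂ] E) (p : V × T.rangeᗮ) :
    orthogonalExtension T p = T p.1 + p.2 := rfl

lemma norm_le_norm_orthogonalExtension (T : V →ₗ[ℂ] E) (p : V × T.rangeᗮ) :
    ‖T p.1‖ ≤ ‖orthogonalExtension T p‖ := by
  have horth : ⟪T p.1, (p.2 : E)⟫_ℂ = 0 := p.2.2 _ (T.mem_range_self p.1)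
  have := norm_add_sq_eq_norm_sq_add_norm_sq_of_inner_eq_zero _ _ horth
  rw [← orthogonalExtension_apply] at this
  nlinarith [norm_nonneg (orthogonalExtension T p), mul_self_nonneg ‖(p.2 : E)‖]

/-- The operator `A` is the density of the form `φ` with respect to `T`: it satisfies
`⟪T u, A (T v)⟫ = φ u v` and vanishes on the orthogonal complement of the range of `T`, as does its
adjoint. -/
def IsFormDensity (T : V →ₗ[ℂ] E) (φ : V →ₗ⋆[ℂ] V →ₗ[ℂ] ℂ) (A : E →L[ℂ] E) : Prop :=
  ∀ p q, ⟪orthogonalExtension T p, A (orthogonalExtension T q)⟫_ℂ = φ p.1 q.1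

lemma IsFormDensity.inner_eq {T : V →ₗ[ℂ] E} {φ : V →ₗ⋆[ℂ] V →ₗ[ℂ] ℂ} {A : E →L[ℂ] E}
    (hA : IsFormDensity T φ A) (u v : V) : ⟪T u, A (T v)⟫_ℂ = φ u v := by
  simpa only [orthogonalExtension_apply, ZeroMemClass.coe_zero, add_zero] using hA (u, 0) (v, 0)

variable [CompleteSpace E]

lemma denseRange_orthogonalExtension (T : V →ₗ[ℂ] E) : DenseRange (orthogonalExtension T) := by
  rw [DenseRange, ← LinearMap.coe_range, Submodule.dense_iff_topologicalClosure_eq_top,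
    Submodule.topologicalClosure_eq_top_iff, orthogonalExtension, LinearMap.range_coprod,
    Submodule.range_subtype, ← Submodule.inf_orthogonal, Submodule.inf_orthogonal_eq_bot]

lemma exists_operator_inner_eq_of_norm_le {K : Type*} [NormedAddCommGroup K]
    [InnerProductSpace ℂ K] [CompleteSpace K] {T : V →ₗ[ℂ] E} (hT : DenseRange T)
    {j : V →ₗ[ℂ] K} (hj : ∀ v, ‖j v‖ ≤ ‖T v‖) :
    ∃ A : E →L[ℂ] E, 0 ≤ A ∧ A ≤ 1 ∧ ∀ u v, ⟪T u, A (T v)⟫_ℂ = ⟪j u, j v⟫_ℂ := by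
  have hj_one (v : V) : ‖j v‖ ≤ 1 * ‖T v‖ := by simpa only [one_mul] using hj v
  set S : E →L[ℂ] K := j.extendOfNorm T
  have hST (v : V) : S (T v) = j v := LinearMap.extendOfNorm_eq hT ⟨1, hj_one⟩ v
  have hS : ‖S‖ ≤ 1 := LinearMap.opNorm_extendOfNorm_le hT zero_le_one hj_one
  have hpos : 0 ≤ S.adjoint ∘L S :=
    (ContinuousLinearMap.nonneg_iff_isPositive _).2 S.isPositive_adjoint_comp_self
  refine ⟨S.adjoint ∘L S, hpos, ?_, fun u v => ?_⟩
  · rw [← CStarAlgebra.norm_le_one_iff_of_nonneg _ hpos, S.norm_adjoint_comp_self]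
    exact mul_le_one₀ hS (norm_nonneg S) hS
  · rw [ContinuousLinearMap.comp_apply, ContinuousLinearMap.adjoint_inner_right, hST, hST]

lemma exists_isFormDensity_of_le (T : V →ₗ[ℂ] E) {φ : V →ₗ⋆[ℂ] V →ₗ[ℂ] ℂ} (hφ : φ.IsNonneg)
    (hle : ∀ v, φ v v ≤ ⟪T v, T v⟫_ℂ) :
    ∃ A : E →L[ℂ] E, 0 ≤ A ∧ A ≤ 1 ∧ IsFormDensity T φ A := by
  obtain ⟨K, _, _, _, j, hj⟩ := exists_hilbertSpace_inner_eq ⟨isSymm_of_isNonneg hφ, hφ⟩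
  have hnorm (v : V) : ‖j v‖ ≤ ‖T v‖ := by
    have := (Complex.le_def.1 (hle v)).1
    rw [← hj] at this
    rw [← sq_le_sq₀ (norm_nonneg _) (norm_nonneg _)]
    simpa only [← inner_self_eq_norm_sq (𝕜 := ℂ), RCLike.re_eq_complex_re] using this
  obtain ⟨A, hA, hA_one, hAj⟩ := exists_operator_inner_eq_of_norm_le
    (denseRange_orthogonalExtension T) (j := j ∘ₗ LinearMap.fst ℂ V T.rangeᗮ)
    fun p => (hnorm p.1).trans (norm_le_norm_orthogonalExtension T p)
  exact ⟨A, hA, hA_one, fun p q => (hAj p q).trans (hj p.1 q.1)⟩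

end RadonNikodym

section PositiveFunctional

variable {R : Type*} [Ring R] [StarRing R] [Algebra ℂ R] [StarModule ℂ R]

/-- The sesquilinear form `(c, b) ↦ ψ (c⋆ b)` of a linear functional `ψ` on a `⋆`-algebra. -/
def starForm (ψ : R →ₗ[ℂ] ℂ) : R →ₗ⋆[ℂ] R →ₗ[ℂ] ℂ :=
  ((LinearMap.mul ℂ R).compr₂ ψ).comp (starLinearEquiv ℂ).toLinearMap

lemma starForm_apply (ψ : R →ₗ[ℂ] ℂ) (c b : R) : starForm ψ c b = ψ (star c * b) := rfl

/-- Cauchy-Schwarz against `1`. -/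
lemma norm_sq_le_of_star_mul_self_nonneg {ψ : R →ₗ[ℂ] ℂ} (hψ : ∀ b, 0 ≤ ψ (star b * b)) (b : R) :
    ‖ψ b‖ ^ 2 ≤ ‖ψ 1‖ * ‖ψ (star b * b)‖ := by
  have hform : (starForm ψ).IsNonneg := ⟨hψ⟩
  obtain ⟨K, _, _, _, j, hj⟩ := exists_hilbertSpace_inner_eq ⟨isSymm_of_isNonneg hform, hform⟩
  have hb : ψ b = ⟪j 1, j b⟫_ℂ := by rw [hj, starForm_apply, star_one, one_mul]
  have hnorm (c : R) : ‖j c‖ ^ 2 = ‖ψ (star c * c)‖ := by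
    rw [← starForm_apply, ← hj, inner_self_eq_norm_sq_to_K, norm_pow, RCLike.norm_ofReal, abs_norm]
  calc ‖ψ b‖ ^ 2 ≤ (‖j 1‖ * ‖j b‖) ^ 2 := by rw [hb]; gcongr; exact norm_inner_le_norm _ _
    _ = ‖ψ 1‖ * ‖ψ (star b * b)‖ := by rw [mul_pow, hnorm, hnorm, star_one, one_mul]

/-- The functional `b ↦ ∫ ω_t(b) dν(t)` averaging a weakly integrable family `ω` of functionals. -/
def integralFunctional {X V : Type*} [AddCommMonoid V] [Module ℂ V] [MeasurableSpace X]
    {ν : Measure X} {ω : X → V →ₗ[ℂ] ℂ} (hω : ∀ b, Integrable (fun t => ω t b) ν) : V →ₗ[ℂ] ℂ where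
  toFun b := ∫ t, ω t b ∂ν
  map_add' b c := by simp only [map_add, integral_add (hω b) (hω c)]
  map_smul' r b := by simp only [map_smul, integral_smul, RingHom.id_apply]

end PositiveFunctional

section OrbitMap

variable (B : StarSubalgebra ℂ (H →L[ℂ] H)) (x : H)

/-- The map `b ↦ b x` sending an algebra of operators onto the orbit of the vector `x`. -/
def orbitMap : B →ₗ[ℂ] H :=
  (ContinuousLinearMap.apply ℂ H x).toLinearMap ∘ₗ B.subtype.toLinearMap

lemma orbitMap_apply (b : B) : orbitMap B x b = (b : H →L[ℂ] H) x := rfl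

lemma inner_coe_star_apply (b : B) (y z : H) :
    ⟪((star b : B) : H →L[ℂ] H) y, z⟫_ℂ = ⟪y, (b : H →L[ℂ] H) z⟫_ℂ :=
  ContinuousLinearMap.adjoint_inner_left (b : H →L[ℂ] H) z y

lemma inner_orbitMap (c b : B) :
    ⟪orbitMap B x c, orbitMap B x b⟫_ℂ = ⟪x, ((star c * b : B) : H →L[ℂ] H) x⟫_ℂ := by
  rw [← star_star c, orbitMap_apply, inner_coe_star_apply, star_star]
  rfl

lemma exists_orthogonalExtension_orbitMap_mul (b : B) (p : B × (orbitMap B x).rangeᗮ) :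
    ∃ q, q.1 = b * p.1 ∧
      orthogonalExtension (orbitMap B x) q =
        (b : H →L[ℂ] H) (orthogonalExtension (orbitMap B x) p) := by
  have hw : (b : H →L[ℂ] H) p.2 ∈ (orbitMap B x).rangeᗮ := by
    rintro - ⟨c, rfl⟩
    rw [← inner_coe_star_apply]
    exact p.2.2 _ ⟨star b * c, rfl⟩
  refine ⟨(b * p.1, ⟨_, hw⟩), rfl, ?_⟩
  rw [orthogonalExtension_apply, orthogonalExtension_apply, map_add]
  rfl

variable {B x}

lemma IsFormDensity.mem_centralizer {ψ : B →ₗ[ℂ] ℂ} {A : H →L[ℂ] H}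
    (hA : IsFormDensity (orbitMap B x) (starForm ψ) A) :
    A ∈ Set.centralizer (B : Set (H →L[ℂ] H)) := by
  intro b hb
  lift b to B using hb
  refine ext_inner_of_denseRange (denseRange_orthogonalExtension (orbitMap B x)) fun p q => ?_
  obtain ⟨p', hp', hp⟩ := exists_orthogonalExtension_orbitMap_mul B x (star b) p
  obtain ⟨q', hq', hq⟩ := exists_orthogonalExtension_orbitMap_mul B x b q
  rw [mul_apply_eq_comp, mul_apply_eq_comp, ← inner_coe_star_apply, ← hp,
    ← hq, hA, hA, hp', hq', starForm_apply, starForm_apply, star_mul, star_star, mul_assoc]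

lemma inner_sqrt_apply_of_commute {A b : H →L[ℂ] H} (hA : 0 ≤ A) (hAb : Commute A b) (x : H) :
    ⟪CFC.sqrt A x, b (CFC.sqrt A x)⟫_ℂ = ⟪x, A (b x)⟫_ℂ := by
  have hsqrt : (CFC.sqrt A).adjoint = CFC.sqrt A := (CFC.sqrt_nonneg A).isSelfAdjoint
  have hcomm : Commute (CFC.sqrt A) b := hAb.cfcₙ_nnreal _
  have hmul : CFC.sqrt A * (b * CFC.sqrt A) = A * b := by
    rw [← hcomm.eq, ← mul_assoc, CFC.sqrt_mul_sqrt_self A hA]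
  rw [← ContinuousLinearMap.adjoint_inner_right, hsqrt]
  exact congr(⟪x, $hmul x⟫_ℂ)

end OrbitMap

namespace StateSpace

variable {B : StarSubalgebra ℂ (H →L[ℂ] H)}

lemma apply_star_mul_self_nonneg (ω : StateSpace B) (b : B) : 0 ≤ ω.1 (star b * b) :=
  ω.2.1 _ (star_mul_self_nonneg (b : H →L[ℂ] H))

lemma norm_apply_star_mul_self_le (ω : StateSpace B) (b : B) : ‖ω.1 (star b * b)‖ ≤ ‖b‖ ^ 2 := by
  have hle : 0 ≤ ω.1 (((‖b‖ ^ 2 : ℝ) : ℂ) • 1 - star b * b) := by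
    refine ω.2.1 _ (sub_nonneg.2 ?_)
    have := CStarAlgebra.star_mul_le_algebraMap_norm_sq (a := (b : H →L[ℂ] H))
    rwa [Algebra.algebraMap_eq_smul_one, RCLike.real_smul_eq_coe_smul (K := ℂ)] at this
  rw [map_sub, map_smul, ω.2.2, smul_eq_mul, mul_one, sub_nonneg] at hle
  simpa using CStarAlgebra.norm_le_norm_of_nonneg_of_le (ω.apply_star_mul_self_nonneg b) hle

lemma norm_apply_le (ω : StateSpace B) (b : B) : ‖ω.1 b‖ ≤ ‖b‖ := by
  rw [← sq_le_sq₀ (norm_nonneg _) (norm_nonneg _)]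
  calc ‖ω.1 b‖ ^ 2 ≤ ‖ω.1 1‖ * ‖ω.1 (star b * b)‖ :=
        norm_sq_le_of_star_mul_self_nonneg (ψ := (ω.1 : B →L[ℂ] ℂ).toLinearMap)
          ω.apply_star_mul_self_nonneg b
    _ ≤ ‖b‖ ^ 2 := by
        rw [ω.2.2, norm_one, one_mul]
        exact ω.norm_apply_star_mul_self_le b

lemma integrable_apply (μ : Measure (StateSpace B)) [IsFiniteMeasure μ] (b : B) :
    Integrable (fun ω : StateSpace B => ω.1 b) μ :=
  .of_bound ((WeakDual.eval_continuous b).comp continuous_subtype_val).aestronglyMeasurable ‖b‖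
    (.of_forall (norm_apply_le · b))

end StateSpace

theorem exists_povm_of_barycenter_general
    (B : StarSubalgebra ℂ (H →L[ℂ] H)) (x : H) {X : Type*} [MeasurableSpace X] (μ : Measure X)
    (ω : X → B →ₗ[ℂ] ℂ) (hpos : ∀ t b, 0 ≤ ω t (star b * b))
    (hint : ∀ b, Integrable (fun t => ω t b) μ)
    (hbary : ∀ b : B, ⟪x, (b : H →L[ℂ] H) x⟫_ℂ = ∫ t, ω t b ∂μ) :
    ∃ A : Set X → (H →L[ℂ] H), IsPOVMeasure A ∧
      (∀ S : Set X, MeasurableSet S → A S ∈ Set.centralizer (B : Set (H →L[ℂ] H))) ∧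
      ∀ S : Set X, MeasurableSet S → ∀ b : B,
        ⟪CFC.sqrt (A S) x, (b : H →L[ℂ] H) (CFC.sqrt (A S) x)⟫_ℂ = ∫ t in S, ω t b ∂μ := by
  let ψ (S : Set X) : B →ₗ[ℂ] ℂ := integralFunctional fun b => (hint b).restrict (s := S)
  have hψ (S : Set X) (b : B) : ψ S b = ∫ t in S, ω t b ∂μ := rfl
  have hψ_nonneg (S : Set X) : (starForm (ψ S)).IsNonneg := ⟨fun b => integral_nonneg (hpos · b)⟩
  have hψ_le (S : Set X) (b : B) :
      starForm (ψ S) b b ≤ ⟪orbitMap B x b, orbitMap B x b⟫_ℂ := by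
    rw [inner_orbitMap, hbary, starForm_apply, hψ]
    exact integral_mono_measure Measure.restrict_le_self (.of_forall (hpos · b)) (hint _)
  choose A hA_nonneg hA_le_one hA using fun S =>
    exists_isFormDensity_of_le (orbitMap B x) (hψ_nonneg S) (hψ_le S)
  have hA_mem (S : Set X) : A S ∈ Set.centralizer (B : Set (H →L[ℂ] H)) := (hA S).mem_centralizer
  refine ⟨A, ⟨fun S _ => ⟨hA_nonneg S, hA_le_one S⟩, fun f hf hdisj => ?_⟩, fun S _ => hA_mem S,
    fun S _ b => ?_⟩
  · refine hasSum_inner_of_denseRange (denseRange_orthogonalExtension (orbitMap B x))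
      (fun n => hA_nonneg (f n)) fun p q => ?_
    simp only [hA _ p q, starForm_apply, hψ]
    exact hasSum_integral_iUnion hf hdisj (hint _).integrableOn
  · rw [inner_sqrt_apply_of_commute (hA_nonneg S) (hA_mem S b b.2).symm]
    simpa [orbitMap_apply, starForm_apply, hψ] using (hA S).inner_eq 1 b

/-- **Theorem 1 (Tomita).**  Let `B` be a unital C*-subalgebra of `B(H)` and `μ` a regular
Borel probability measure on the state space `K` of `B`.  If there is a unit vector
`x ∈ H` such that `ω_x|_B` is the barycenter of `μ`, then there is a POV measure `A` with
range in the commutant `B'` such that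
`⟨A(S)^{1/2} x, B (A(S)^{1/2} x)⟩ = ∫_S ω(B) dμ(ω)` for all `S ∈ Σ` and `B ∈ B`. -/
theorem exists_povm_of_barycenter
    (B : StarSubalgebra ℂ (H →L[ℂ] H)) (hBclosed : IsClosed (B : Set (H →L[ℂ] H)))
    (x : H) (hx : ‖x‖ = 1)
    (μ : Measure (StateSpace B)) [IsProbabilityMeasure μ] (hreg : μ.Regular)
    (hbary : ∀ b : B, ⟪x, (b : H →L[ℂ] H) x⟫_ℂ = ∫ ω : StateSpace B, ω.1 b ∂μ) :
    ∃ A : Set (StateSpace B) → (H →L[ℂ] H), IsPOVMeasure A ∧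
      (∀ S : Set (StateSpace B), MeasurableSet S →
        A S ∈ Set.centralizer (B : Set (H →L[ℂ] H))) ∧
      ∀ S : Set (StateSpace B), MeasurableSet S → ∀ b : B,
        ⟪CFC.sqrt (A S) x, (b : H →L[ℂ] H) (CFC.sqrt (A S) x)⟫_ℂ =
          ∫ ω in S, ω.1 b ∂μ :=
  exists_povm_of_barycenter_general B x μ (fun ω => (ω.1 : B →L[ℂ] ℂ).toLinearMap)
    StateSpace.apply_star_mul_self_nonneg (StateSpace.integrable_apply μ) hbary

end
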